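/- arXiv:2501.15291 — 2 statements merged into one kernel-verified Lean document; each statement's English description precedes it below -/
import Mathlib

section
/- For every odd n ∈ ℕ, ∫_ℝ cos(x)·e_n(x) dx = 0, and for every l ∈ ℕ, ∫_ℝ cos(x)·e_{2l}(x) dx = ( √π / (2^{2l−1}·(2l)!·e) )^{1/2} · (−1)^l · H_{2l}(1). -/
open MeasureTheory Polynomial

/-- The physicists' Hermite polynomials: `H 0 = 1`, `H (n+1) = 2x·H n − (H n)'`. -/
noncomputable def hermiteH : ℕ → Polynomial ℝ
  | 0 => 1
  | n + 1 => 2 * X * hermiteH n - derivative (hermiteH n)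

/-- The `n`-th Hermite function. -/
noncomputable def hermiteFun (n : ℕ) (x : ℝ) : ℝ :=
  (Real.sqrt (2 ^ n * (n.factorial : ℝ) * Real.sqrt Real.pi))⁻¹
    * (hermiteH n).eval x * Real.exp (-x ^ 2 / 2)

lemma C_two_eq : (C 2 : ℝ[X]) = 2 := map_ofNat C 2

lemma hermiteH_deriv (n : ℕ) :
    derivative (hermiteH (n + 1)) = (2 * ((n : ℝ[X]) + 1)) * hermiteH n := by
  induction n with
  | zero => simp [hermiteH]
  | succ n ih =>
    have h : hermiteH (n + 2) = 2 * X * hermiteH (n + 1) - derivative (hermiteH (n + 1)) := rfl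
    have h1 : hermiteH (n + 1) = 2 * X * hermiteH n - derivative (hermiteH n) := rfl
    have h2 : derivative (2 * ((n : ℝ[X]) + 1) * hermiteH n)
        = 2 * ((n : ℝ[X]) + 1) * derivative (hermiteH n) := by
      have : (2 * ((n : ℝ[X]) + 1)) = C (2 * ((n : ℝ) + 1)) := by simp [C_two_eq]
      rw [this, derivative_C_mul]
    have h3 : derivative (2 * X * hermiteH (n + 1))
        = 2 * hermiteH (n + 1) + 2 * X * derivative (hermiteH (n + 1)) := by
      simp [derivative_mul]
    rw [h, derivative_sub, h3, ih, h2]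
    push_cast
    linear_combination (-2 * ((n : ℝ[X]) + 1)) * h1

lemma integrable_poly_gauss (p : ℝ[X]) :
    Integrable (fun x : ℝ => p.eval x * Real.exp (-x ^ 2 / 2)) := by
  induction p using Polynomial.induction_on' with
  | add p q hp hq =>
    simp only [eval_add, add_mul]
    exact hp.add hq
  | monomial n a =>
    have h := integrable_rpow_mul_exp_neg_mul_sq (b := 1 / 2) (by norm_num)
      (s := (n : ℝ)) (by have := Nat.cast_nonneg (α := ℝ) n; linarith)
    convert! h.const_mul a using 2 with x
    rw [eval_monomial, Real.rpow_natCast, show -x ^ 2 / 2 = -(1 / 2) * x ^ 2 by ring]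
    ring

noncomputable def gk (p : ℝ[X]) (x : ℝ) : ℂ :=
  Complex.exp (Complex.I * x) * ((p.eval x * Real.exp (-x ^ 2 / 2) : ℝ) : ℂ)

lemma integrable_gk (p : ℝ[X]) : Integrable (gk p) := by
  have h := (integrable_poly_gauss p).ofReal (𝕜 := ℂ)
  refine h.bdd_mul (c := 1) (by fun_prop) (Filter.Eventually.of_forall fun x => ?_)
  rw [mul_comm, Complex.norm_exp_ofReal_mul_I]

noncomputable def LL (p : ℝ[X]) : ℂ := ∫ x, gk p x

lemma LL_add (p q : ℝ[X]) : LL (p + q) = LL p + LL q := by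
  unfold LL
  rw [← integral_add (integrable_gk p) (integrable_gk q)]
  congr 1; ext x; simp [gk]; ring

lemma LL_smul (a : ℝ) (p : ℝ[X]) : LL (C a * p) = a * LL p := by
  unfold LL
  rw [← integral_const_mul]
  congr 1; ext x; simp [gk]; ring

lemma LL_ibp (p : ℝ[X]) : LL (X * p) = Complex.I * LL p + LL (derivative p) := by
  have hd : ∀ x : ℝ, HasDerivAt (gk p)
      (Complex.I * gk p x + gk (derivative p) x + (-1 : ℝ) * gk (X * p) x) x := by
    intro x
    have h1 : HasDerivAt (fun x : ℝ => Complex.exp (Complex.I * x))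
        (Complex.exp (Complex.I * x) * (Complex.I * 1)) x :=
      ((Complex.ofRealCLM.hasDerivAt (x := x)).const_mul Complex.I).cexp
    have h3 : HasDerivAt (fun x : ℝ => -x ^ 2 / 2) (-x) x := by
      have := ((hasDerivAt_pow 2 x).neg).div_const 2
      convert! this using 1
      simp
      ring
    have h2 := ((p.hasDerivAt x).mul h3.exp).ofReal_comp
    convert! h1.mul h2 using 1
    simp [gk]
    ring
  have h0 := integral_eq_zero_of_hasDerivAt_of_integrable hd
    ((((integrable_gk p).const_mul _).add (integrable_gk _)).add
      ((integrable_gk _).const_mul _)) (integrable_gk p)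
  have hA : Integrable (fun x => Complex.I * gk p x) := (integrable_gk p).const_mul _
  have hB : Integrable (fun x => Complex.I * gk p x + gk (derivative p) x) :=
    hA.add (integrable_gk _)
  rw [integral_add hB ((integrable_gk _).const_mul _), integral_add hA (integrable_gk _),
      integral_const_mul, integral_const_mul] at h0
  unfold LL
  push_cast at h0
  linear_combination -h0

lemma LL_one : LL 1 = ((Real.sqrt (2 * Real.pi) * Real.exp (-(1 / 2)) : ℝ) : ℂ) := by
  have h := fourierIntegral_gaussian (b := 1 / 2) (by norm_num) 1
  have h2 : LL 1 = ∫ x : ℝ, Complex.exp (Complex.I * 1 * x) * Complex.exp (-(1 / 2) * x ^ 2) := by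
    unfold LL
    congr 1; ext x
    simp [gk]
    congr 1; ring
  rw [h2, h]
  have e : (Real.pi / (1 / 2) : ℂ) = ((2 * Real.pi : ℝ) : ℂ) := by push_cast; ring
  rw [e, Real.sqrt_eq_rpow, Complex.ofReal_mul ((2 * Real.pi) ^ (1 / 2 : ℝ)), Complex.ofReal_cpow (by positivity)]
  push_cast
  norm_num

lemma hermiteH_one (n : ℕ) : (hermiteH (n + 2)).eval 1
    = 2 * (hermiteH (n + 1)).eval 1 - 2 * (n + 1) * (hermiteH n).eval 1 := by
  have h : hermiteH (n + 2) = 2 * X * hermiteH (n + 1) - derivative (hermiteH (n + 1)) := rfl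
  rw [h, hermiteH_deriv]
  simp

lemma LL_rec (n : ℕ) : LL (hermiteH (n + 2))
    = 2 * Complex.I * LL (hermiteH (n + 1)) + 2 * (n + 1) * LL (hermiteH n) := by
  have h : hermiteH (n + 2) = C 2 * (X * hermiteH (n + 1))
      + C (-(2 * ((n : ℝ) + 1))) * hermiteH n := by
    have h : hermiteH (n + 2) = 2 * X * hermiteH (n + 1) - derivative (hermiteH (n + 1)) := rfl
    rw [h, hermiteH_deriv]
    simp [C_two_eq]
    ring
  have h' : derivative (hermiteH (n + 1)) = C (2 * ((n : ℝ) + 1)) * hermiteH n := by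
    rw [hermiteH_deriv]; simp [C_two_eq]
  rw [h, LL_add, LL_smul, LL_smul, LL_ibp, h', LL_smul]
  push_cast
  ring

lemma LL_hermite (n : ℕ) : LL (hermiteH n) = LL 1 * Complex.I ^ n * ((hermiteH n).eval 1 : ℝ) := by
  induction n using Nat.twoStepInduction with
  | zero => simp [hermiteH]
  | one =>
    have : hermiteH 1 = C 2 * (X * 1) := by simp [hermiteH, C_two_eq]
    rw [this, LL_smul, LL_ibp, show derivative (1 : ℝ[X]) = C 0 * 1 by simp, LL_smul]
    simp [C_two_eq]
    ring
  | more n ih1 ih2 =>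
    rw [LL_rec, ih1, ih2, hermiteH_one]
    push_cast
    have := Complex.I_sq
    linear_combination (- (2 * (n + 1) * LL 1 * Complex.I ^ n * ((hermiteH n).eval 1 : ℝ)) : ℂ) * -this

lemma cos_int (n : ℕ) : ∫ x : ℝ, Real.cos x * hermiteFun n x
    = (Real.sqrt (2 ^ n * (n.factorial : ℝ) * Real.sqrt Real.pi))⁻¹ * (LL (hermiteH n)).re := by
  have : (LL (hermiteH n)).re = ∫ x, (gk (hermiteH n) x).re :=
    (integral_re (𝕜 := ℂ) (integrable_gk _)).symm
  rw [this, ← integral_const_mul]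
  congr 1; ext x
  have : Complex.exp (Complex.I * x) = Complex.cos x + Complex.sin x * Complex.I := by
    rw [mul_comm, Complex.exp_mul_I]
  unfold gk
  rw [this, Complex.re_mul_ofReal, ← Complex.ofReal_cos, ← Complex.ofReal_sin]
  simp only [hermiteFun, Complex.add_re, Complex.ofReal_re, Complex.re_ofReal_mul, Complex.I_re]
  ring

/-- `∫ cos(x) eₙ(x) dx = 0` for odd `n`, and
`∫ cos(x) e_{2l}(x) dx = √(√π / (2^{2l-1} (2l)! e)) · (-1)^l · H_{2l}(1)`. -/
theorem cos_hermite_integrals :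
    (∀ n : ℕ, Odd n → ∫ x : ℝ, Real.cos x * hermiteFun n x = 0) ∧
    (∀ l : ℕ, ∫ x : ℝ, Real.cos x * hermiteFun (2 * l) x
      = Real.sqrt (Real.sqrt Real.pi /
          ((2 : ℝ) ^ (2 * (l : ℤ) - 1) * ((2 * l).factorial : ℝ) * Real.exp 1))
        * (-1) ^ l * (hermiteH (2 * l)).eval 1) := by
  refine ⟨fun n hn => ?_, fun l => ?_⟩
  · obtain ⟨k, rfl⟩ := hn
    rw [cos_int, LL_hermite, LL_one, pow_succ Complex.I, pow_mul Complex.I, Complex.I_sq]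
    have : ((-1 : ℂ)) ^ k = (((-1) ^ k : ℝ) : ℂ) := by push_cast; rfl
    rw [this, Complex.re_mul_ofReal, Complex.re_ofReal_mul, Complex.re_ofReal_mul]
    simp
  · rw [cos_int, LL_hermite, LL_one, pow_mul Complex.I, Complex.I_sq]
    have : ((-1 : ℂ)) ^ l = (((-1) ^ l : ℝ) : ℂ) := by push_cast; rfl
    rw [this, ← Complex.ofReal_mul, ← Complex.ofReal_mul, Complex.ofReal_re]
    have key : (Real.sqrt (2 ^ (2 * l) * ((2 * l).factorial : ℝ) * Real.sqrt Real.pi))⁻¹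
        * (Real.sqrt (2 * Real.pi) * Real.exp (-(1 / 2)))
        = Real.sqrt (Real.sqrt Real.pi /
          ((2 : ℝ) ^ (2 * (l : ℤ) - 1) * ((2 * l).factorial : ℝ) * Real.exp 1)) := by
      have he : Real.exp (-(1 / 2)) = Real.sqrt (Real.exp 1)⁻¹ := by
        rw [← Real.exp_neg, Real.sqrt_eq_rpow, ← Real.exp_mul]
        norm_num
      have hz : (2 : ℝ) ^ (2 * (l : ℤ) - 1) = 2 ^ (2 * l) / 2 := by
        rw [zpow_sub₀ (by norm_num)]
        norm_cast
      rw [he, hz, ← Real.sqrt_inv, ← Real.sqrt_mul (by positivity),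
        ← Real.sqrt_mul (by positivity)]
      congr 1
      have hp : Real.sqrt Real.pi * Real.sqrt Real.pi = Real.pi :=
        Real.mul_self_sqrt Real.pi_pos.le
      have hp0 : Real.sqrt Real.pi ≠ 0 := (Real.sqrt_pos.mpr Real.pi_pos).ne'
      have hf : ((2 * l).factorial : ℝ) ≠ 0 := by positivity
      nth_rewrite 2 [← hp]
      field_simp
    rw [← key]
    ring
end

section
/- The series ∑_{n=0}^∞ (e_n′(0))² diverges; in fact ∑_{n=0}^∞ (e_n′(0))² = 2·∑_{n=0}^∞ (2n+1)·(e_{2n}(0))² ≥ 2·∑_{n=0}^∞ (e_{2n}(0))², and the right-hand series diverges. (Hence the e-product ⟨δ′, δ′⟩_e of the distributional derivative of the Dirac delta with itself, computed with respect to the Hermite basis, does not exist.) -/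
open MeasureTheory Polynomial Filter Topology

lemma hermiteH_succ (n : ℕ) :
    hermiteH (n + 1) = 2 * X * hermiteH n - derivative (hermiteH n) := rfl

lemma derivative_hermiteH (n : ℕ) :
    derivative (hermiteH (n + 1)) = 2 * ((n : ℝ[X]) + 1) * hermiteH n := by
  induction n with
  | zero => simp [hermiteH]
  | succ k ih =>
    have hC : derivative (2 * ((k : ℝ[X]) + 1)) = 0 := by
      have : (2 * ((k : ℝ[X]) + 1)) = ((2 * (k + 1) : ℕ) : ℝ[X]) := by push_cast; ring
      rw [this, derivative_natCast]
    have h2 : derivative (2 * X : ℝ[X]) = 2 := by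
      have : (2 : ℝ[X]) = C 2 := rfl
      rw [this, derivative_C_mul, derivative_X, mul_one]
    rw [hermiteH_succ (k + 1), derivative_sub, ih, derivative_mul, derivative_mul (f := 2 * ((k : ℝ[X]) + 1)),
      hC, h2, ih, hermiteH_succ k]
    push_cast
    ring

lemma hermiteH_eval_add_two (n : ℕ) :
    (hermiteH (n + 2)).eval 0 = -(2 * ((n : ℝ) + 1) * (hermiteH n).eval 0) := by
  rw [hermiteH_succ (n + 1), derivative_hermiteH]
  simp

lemma hermiteH_eval_odd (n : ℕ) : (hermiteH (2 * n + 1)).eval 0 = 0 := by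
  induction n with
  | zero => simp [hermiteH]
  | succ k ih =>
    have := hermiteH_eval_add_two (2 * k + 1)
    rw [ih, mul_zero, neg_zero] at this
    exact this

lemma deriv_hermiteFun (n : ℕ) : deriv (hermiteFun n) 0 =
    (Real.sqrt (2 ^ n * (n.factorial : ℝ) * Real.sqrt Real.pi))⁻¹
      * (derivative (hermiteH n)).eval 0 := by
  have h1 := ((hermiteH n).hasDerivAt 0).const_mul
    (Real.sqrt (2 ^ n * (n.factorial : ℝ) * Real.sqrt Real.pi))⁻¹
  have h2 : HasDerivAt (fun x : ℝ => Real.exp (-x ^ 2 / 2)) 0 0 := by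
    have := ((((hasDerivAt_id (0 : ℝ)).pow 2).neg).div_const 2).exp
    simpa using this
  have h3 := h1.mul h2
  have h4 : deriv (hermiteFun n) 0 = _ := h3.deriv
  rw [h4]
  simp

lemma hermiteFun_zero_sq (n : ℕ) : (hermiteFun n 0) ^ 2 =
    ((hermiteH n).eval 0) ^ 2 / (2 ^ n * (n.factorial : ℝ) * Real.sqrt Real.pi) := by
  unfold hermiteFun
  simp only [mul_pow, inv_pow]
  rw [Real.sq_sqrt (by positivity)]
  simp
  ring

lemma deriv_sq (n : ℕ) : (deriv (hermiteFun (n + 1)) 0) ^ 2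
    = 2 * ((n : ℝ) + 1) * (hermiteFun n 0) ^ 2 := by
  rw [deriv_hermiteFun, hermiteFun_zero_sq, derivative_hermiteH, mul_pow, inv_pow,
    Real.sq_sqrt (by positivity), Nat.factorial_succ]
  have : (0:ℝ) < Real.sqrt Real.pi := Real.sqrt_pos.2 Real.pi_pos
  have h : (n.factorial : ℝ) ≠ 0 := by positivity
  have h4 : (n : ℝ) + 1 ≠ 0 := by positivity
  simp
  field_simp
  ring

lemma even_rec (n : ℕ) : (hermiteFun (2 * (n + 1)) 0) ^ 2
    = (2 * (n : ℝ) + 1) / (2 * n + 2) * (hermiteFun (2 * n) 0) ^ 2 := by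
  rw [hermiteFun_zero_sq, hermiteFun_zero_sq, show 2 * (n + 1) = 2 * n + 2 by ring,
    hermiteH_eval_add_two, Nat.factorial_succ, Nat.factorial_succ]
  have : (0:ℝ) < Real.sqrt Real.pi := Real.sqrt_pos.2 Real.pi_pos
  have h : ((2 * n).factorial : ℝ) ≠ 0 := by positivity
  have h4 : 2 * (n : ℝ) + 1 ≠ 0 := by positivity
  have h5 : 2 * (n : ℝ) + 2 ≠ 0 := by positivity
  have h3 : 2 * (n : ℝ) + 1 + 1 ≠ 0 := by positivity
  push_cast
  rw [pow_add]
  field_simp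
  ring

lemma even_lower (n : ℕ) :
    (hermiteFun 0 0) ^ 2 * (1 / ((n : ℝ) + 1)) ≤ (hermiteFun (2 * n) 0) ^ 2 := by
  induction n with
  | zero => simp
  | succ k ih =>
    rw [even_rec]
    have h1 : (hermiteFun 0 0) ^ 2 * (1 / (((k + 1 : ℕ) : ℝ) + 1)) ≤
        (2 * (k : ℝ) + 1) / (2 * k + 2) * ((hermiteFun 0 0) ^ 2 * (1 / ((k : ℝ) + 1))) := by
      rw [mul_left_comm]
      apply mul_le_mul_of_nonneg_left _ (sq_nonneg _)
      rw [div_mul_div_comm, div_le_div_iff₀ (by positivity) (by positivity)]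
      push_cast
      nlinarith [(Nat.cast_nonneg k : (0 : ℝ) ≤ k)]
    exact h1.trans (mul_le_mul_of_nonneg_left ih (by positivity))

lemma not_summable_even : ¬ Summable (fun n : ℕ => (hermiteFun (2 * n) 0) ^ 2) := by
  intro hs
  have h1 := Summable.of_nonneg_of_le (fun n => by positivity) even_lower hs
  have h0 : (hermiteFun 0 0) ^ 2 ≠ 0 := by
    rw [hermiteFun_zero_sq]
    have : (0:ℝ) < Real.sqrt Real.pi := Real.sqrt_pos.2 Real.pi_pos
    simp [hermiteH, this.ne']
  rw [summable_mul_left_iff h0] at h1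
  have h2 : Summable (fun n : ℕ => 1 / (n : ℝ)) := by
    rw [← summable_nat_add_iff 1]
    simpa using h1
  exact Real.not_summable_one_div_natCast h2

/-- the series `∑ₙ (eₙ'(0))²` diverges to `+∞` (so `⟨δ',δ'⟩_e` does
not exist): even-indexed terms vanish, `(e_{2n+1}'(0))² = 2(2n+1)(e_{2n}(0))²
≥ 2 (e_{2n}(0))²`, and `∑ₙ (e_{2n}(0))²` diverges. -/
theorem eProduct_deltaPrime_deltaPrime_diverges :
    (∀ n : ℕ, deriv (hermiteFun (2 * n)) 0 = 0) ∧
    (∀ n : ℕ, (deriv (hermiteFun (2 * n + 1)) 0) ^ 2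
      = 2 * (2 * (n : ℝ) + 1) * (hermiteFun (2 * n) 0) ^ 2) ∧
    ¬ Summable (fun n : ℕ => (hermiteFun (2 * n) 0) ^ 2) ∧
    Tendsto (fun N => ∑ n ∈ Finset.range N, (deriv (hermiteFun n) 0) ^ 2)
      atTop atTop := by
  have hodd : ∀ n : ℕ, (deriv (hermiteFun (2 * n + 1)) 0) ^ 2
      = 2 * (2 * (n : ℝ) + 1) * (hermiteFun (2 * n) 0) ^ 2 := by
    intro n
    rw [deriv_sq]
    push_cast
    ring
  refine ⟨?_, hodd, not_summable_even, ?_⟩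
  · intro n
    rw [deriv_hermiteFun]
    cases n with
    | zero => simp [hermiteH]
    | succ k =>
      rw [show 2 * (k + 1) = (2 * k + 1) + 1 by ring, derivative_hermiteH, eval_mul,
        hermiteH_eval_odd]
      simp
  · rw [← not_summable_iff_tendsto_nat_atTop_of_nonneg (fun n => sq_nonneg _)]
    intro hs
    have h1 := hs.comp_injective (i := fun n : ℕ => 2 * n + 1) (fun a b h => by
      simp only at h; omega)
    refine not_summable_even (Summable.of_nonneg_of_le (fun n => sq_nonneg _) (fun n => ?_) h1)
    simp only [Function.comp]
    rw [hodd]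
    apply le_mul_of_one_le_left (sq_nonneg _)
    nlinarith [(Nat.cast_nonneg n : (0 : ℝ) ≤ n)]
end
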